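/- (Parseval/isometry identity for an orthogonal spectral function.) Assume S_μ ∩ ℝ = ∅ and let A♯ be a self-adjoint extension of A with eigenvalues {x_n} and corresponding orthogonal eigenprojections P_n (so that Σ_n P_n = I strongly). Then for all φ, η ∈ H: ⟨φ, η⟩ = Σ_n ⟨P_n μ, μ⟩ · conj(φ̂(x_n)) · η̂(x_n), where φ̂(z) := ⟨ξ(z), φ⟩. -/

import Mathlib

/-!
At a real eigenvalue `x n`, the kernel of `B - x n` sits inside the one-dimensional space
`Ker(A* - x n)`, because `B ⊆ A*`. That space is spanned by `ψ(x n)`, which is nonzero and, since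
`x n ∉ S_μ`, not orthogonal to `μ`. Hence `P n` is either zero or the rank-one projection
`v ↦ (⟪ψ, v⟫ / ⟪ψ, ψ⟫) ψ` with `ψ = ψ(x n)`, and in both cases a direct computation
(`inner_proj_eq`) shows that the `n`-th term of the Parseval sum is `⟪φ, P n η⟫`. Summing over
`n` with `Σ P n η = η` gives `⟪φ, η⟫`.
-/

open scoped ComplexConjugate
open Complex

noncomputable section

variable {H : Type*} [NormedAddCommGroup H] [InnerProductSpace ℂ H] [CompleteSpace H]

local notation "⟪" x ", " y "⟫" => @inner ℂ _ _ x y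

/-- The range of `T - z·I`, as a subset of `H`. -/
def ranShift (T : H →ₗ.[ℂ] H) (z : ℂ) : Set H :=
  Set.range fun φ : T.domain => T φ - z • (φ : H)

/-- `ψ` belongs to the kernel of `T - z·I`. -/
def InKerShift (T : H →ₗ.[ℂ] H) (z : ℂ) (ψ : H) : Prop :=
  ∃ h : ψ ∈ T.domain, T ⟨ψ, h⟩ = z • ψ

/-- `H = ran(A - z·I) ∔ span{μ}` (direct algebraic sum): every vector has a unique
decomposition `v = r + c • μ` with `r ∈ ran(A - z·I)`. -/
def GaugeSplit (A : H →ₗ.[ℂ] H) (μ : H) (z : ℂ) : Prop :=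
  ∀ v : H, ∃! c : ℂ, v - c • μ ∈ ranShift A z

/-- The exceptional set `S_μ`. -/
def Smu (A : H →ₗ.[ℂ] H) (μ : H) : Set ℂ := {z | ¬ GaugeSplit A μ z}

/-- `A` is simple: `⋂_{Im z ≠ 0} ran(A - z·I) = {0}`. -/
def IsSimpleOp (A : H →ₗ.[ℂ] H) : Prop :=
  (⋂ z ∈ {w : ℂ | w.im ≠ 0}, ranShift A z) = ({0} : Set H)

/-- `A` is regular: every `z ∈ ℂ` is a point of regular type, i.e. `A - z·I` has a
bounded inverse on its range. -/
def IsRegularOp (A : H →ₗ.[ℂ] H) : Prop :=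
  ∀ z : ℂ, ∃ c : ℝ, 0 < c ∧ ∀ φ : A.domain, c * ‖(φ : H)‖ ≤ ‖A φ - z • (φ : H)‖

/-- `A` has deficiency indices `(1,1)`: for every `z ∈ ℂ`, the kernel of `A* - z·I`
is spanned by a single nonzero vector. -/
def DefIndicesOneOne (A : H →ₗ.[ℂ] H) : Prop :=
  ∀ z : ℂ, ∃ v : H, v ≠ 0 ∧
    {ψ : H | InKerShift A.adjoint z ψ} = {w : H | ∃ c : ℂ, w = c • v}

/-- `A` is symmetric. -/
def IsSymmetricPOp (A : H →ₗ.[ℂ] H) : Prop :=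
  ∀ x y : A.domain, ⟪(A x : H), (y : H)⟫ = ⟪(x : H), (A y : H)⟫

/-- The data of a densely defined, closed, symmetric, simple, regular operator with
deficiency indices (1,1): the setting of Krein's theory. -/
structure KreinOp (H : Type*) [NormedAddCommGroup H] [InnerProductSpace ℂ H]
    [CompleteSpace H] where
  A : H →ₗ.[ℂ] H
  dense : Dense (A.domain : Set H)
  closed : A.IsClosed
  symm : IsSymmetricPOp A
  simple : IsSimpleOp A
  regular : IsRegularOp A
  defOneOne : DefIndicesOneOne A

/-- `B` is a self-adjoint extension of `A` (within `H`). -/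
def IsSAExt (A B : H →ₗ.[ℂ] H) : Prop :=
  A ≤ B ∧ IsSelfAdjoint B

/-- `R z` is, for every `z ∈ res`, the (everywhere defined, bounded) inverse of `B - z·I`;
in particular `res ⊆ ℂ ∖ Sp(B)`. -/
def IsResolventOn (B : H →ₗ.[ℂ] H) (res : Set ℂ) (R : ℂ → H →L[ℂ] H) : Prop :=
  ∀ z ∈ res, (∀ v : H, ∃ h : R z v ∈ B.domain, B ⟨R z v, h⟩ - z • R z v = v)
    ∧ ∀ φ : B.domain, R z ((B φ : H) - z • (φ : H)) = (φ : H)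

/-- `ψ(z) = ψ₀ + (z - z₀)(B - z·I)⁻¹ ψ₀`. -/
def psiFun (R : ℂ → H →L[ℂ] H) (z₀ : ℂ) (ψ₀ : H) (z : ℂ) : H :=
  ψ₀ + (z - z₀) • R z ψ₀

/-- `ξ(z) = ψ(z̄) / ⟪μ, ψ(z̄)⟫`. -/
def xiFun (μ : H) (R : ℂ → H →L[ℂ] H) (z₀ : ℂ) (ψ₀ : H) (z : ℂ) : H :=
  (⟪μ, psiFun R z₀ ψ₀ (conj z)⟫)⁻¹ • psiFun R z₀ ψ₀ (conj z)

/-- `P` is the orthogonal projection onto `Ker(B - x·I)`. -/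
def IsEigenProjection (B : H →ₗ.[ℂ] H) (x : ℝ) (P : H →L[ℂ] H) : Prop :=
  IsSelfAdjoint P ∧ (∀ v : H, P (P v) = P v) ∧ ∀ v : H, (P v = v ↔ InKerShift B (x : ℂ) v)


/-- For a densely defined `A` with self-adjoint extension `B`, one has `B ⊆ A*`. -/
lemma IsSAExt.le_adjoint {A B : H →ₗ.[ℂ] H} (hA : Dense (A.domain : Set H))
    (hB : IsSAExt A B) : B ≤ A.adjoint := by
  refine LinearPMap.IsFormalAdjoint.le_adjoint hA fun y v => ?_
  have hBd : Dense (B.domain : Set H) := hA.mono hB.1.1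
  have h := LinearPMap.adjoint_isFormalAdjoint hBd
  rw [LinearPMap.isSelfAdjoint_def.mp hB.2] at h
  rw [hB.1.2 (x := y) (y := ⟨y, hB.1.1 y.2⟩) rfl]
  exact h ⟨y, hB.1.1 y.2⟩ v

lemma InKerShift.mono {S T : H →ₗ.[ℂ] H} (h : S ≤ T) {z : ℂ} {v : H}
    (hv : InKerShift S z v) : InKerShift T z v := by
  obtain ⟨hd, he⟩ := hv
  exact ⟨h.1 hd, by rw [← h.2 (x := ⟨v, hd⟩) rfl, he]⟩

/-- `ψ(z)` lies in `Ker(A* - z·I)`. -/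
lemma psiFun_inKerShift {A B : H →ₗ.[ℂ] H} (hBA : B ≤ A.adjoint) {res : Set ℂ}
    {R : ℂ → H →L[ℂ] H} (hR : IsResolventOn B res R) {z₀ z : ℂ} (hz : z ∈ res) {ψ₀ : H}
    (hψ₀ : InKerShift A.adjoint z₀ ψ₀) :
    InKerShift A.adjoint z (psiFun R z₀ ψ₀ z) := by
  obtain ⟨h0, e0⟩ := hψ₀
  obtain ⟨h1, e1⟩ := (hR z hz).1 ψ₀
  have h1' := hBA.1 h1
  have e2 : A.adjoint ⟨R z ψ₀, h1'⟩ = ψ₀ + z • R z ψ₀ := by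
    rw [← hBA.2 (x := ⟨R z ψ₀, h1⟩) rfl]
    exact sub_eq_iff_eq_add.mp e1
  refine ⟨A.adjoint.domain.add_mem h0 (A.adjoint.domain.smul_mem _ h1'), ?_⟩
  have : A.adjoint ((⟨ψ₀, h0⟩ : A.adjoint.domain) + (z - z₀) • ⟨R z ψ₀, h1'⟩)
      = z • psiFun R z₀ ψ₀ z := by
    rw [LinearPMap.map_add, LinearPMap.map_smul, e0, e2, psiFun]
    module
  exact this

/-- `ψ(z) ≠ 0`: otherwise `ψ₀` would be in the domain of the extension `B`, hence an
eigenvector of `B` at the resolvent point `z₀`. -/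
lemma psiFun_ne_zero {A B : H →ₗ.[ℂ] H} (hBA : B ≤ A.adjoint) {res : Set ℂ}
    {R : ℂ → H →L[ℂ] H} (hR : IsResolventOn B res R) {z₀ z : ℂ} (hz₀ : z₀ ∈ res)
    (hz : z ∈ res) {ψ₀ : H} (hne : ψ₀ ≠ 0) (hψ₀ : InKerShift A.adjoint z₀ ψ₀) :
    psiFun R z₀ ψ₀ z ≠ 0 := by
  intro h
  obtain ⟨h0, e0⟩ := hψ₀
  obtain ⟨h1, -⟩ := (hR z hz).1 ψ₀
  have hd : ψ₀ ∈ B.domain := by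
    rw [eq_neg_of_add_eq_zero_left h]
    exact B.domain.neg_mem (B.domain.smul_mem _ h1)
  have e : B ⟨ψ₀, hd⟩ = z₀ • ψ₀ := by
    rw [hBA.2 (x := ⟨ψ₀, hd⟩) (y := ⟨ψ₀, h0⟩) rfl, e0]
  have := (hR z₀ hz₀).2 ⟨ψ₀, hd⟩
  rw [e, sub_self, map_zero] at this
  exact hne this.symm

/-- At a real point `t ∉ S_μ`, a nonzero vector of `Ker(A* - t·I) = ran(A - t·I)ᗮ` is not
orthogonal to `μ`. -/
lemma inner_gauge_ne_zero {A : H →ₗ.[ℂ] H} (hA : Dense (A.domain : Set H)) {μ : H} {t : ℝ}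
    (ht : (t : ℂ) ∉ Smu A μ) {ψ : H} (hψ : InKerShift A.adjoint t ψ) (hne : ψ ≠ 0) :
    ⟪ψ, μ⟫ ≠ 0 := by
  intro h
  obtain ⟨hd, he⟩ := hψ
  obtain ⟨c, ⟨w, hw⟩, -⟩ := (not_not.mp ht : GaugeSplit A μ t) ψ
  have hadj : ⟪(t : ℂ) • ψ, (w : H)⟫ = ⟪ψ, A w⟫ := by
    rw [← he]
    exact LinearPMap.adjoint_isFormalAdjoint hA ⟨ψ, hd⟩ w
  have h0 : ⟪ψ, ψ - c • μ⟫ = 0 := by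
    rw [← hw]
    simp only [inner_sub_right, inner_smul_right, ← hadj, inner_smul_left, conj_ofReal, sub_self]
  rw [inner_sub_right, inner_smul_right, h, mul_zero, sub_zero] at h0
  exact hne (inner_self_eq_zero.mp h0)

/-- If every vector in the range of the orthogonal projection `P` is a multiple of `ψ`, then
`P` is zero or the projection onto `span{ψ}`; in both cases `⟪φ, P η⟫` is the Parseval term
attached to the normalized vector `ψ / ⟪μ, ψ⟫`. -/
lemma inner_proj_eq {P : H →L[ℂ] H} (hsa : IsSelfAdjoint P) (hid : ∀ v, P (P v) = P v)
    {ψ μ : H} (hψ : ψ ≠ 0) (hspan : ∀ v, ∃ c : ℂ, P v = c • ψ) (hμ : ⟪ψ, μ⟫ ≠ 0) (φ η : H) :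
    ⟪P μ, μ⟫ * conj ⟪(⟪μ, ψ⟫)⁻¹ • ψ, φ⟫ * ⟪(⟪μ, ψ⟫)⁻¹ • ψ, η⟫ = ⟪φ, P η⟫ := by
  by_cases h0 : ∀ v, P v = 0
  · simp [h0]
  push Not at h0
  obtain ⟨w, hw⟩ := h0
  have hPψ : P ψ = ψ := by
    obtain ⟨c, hc⟩ := hspan w
    have hc0 : c ≠ 0 := by
      rintro rfl
      exact hw (by rw [hc, zero_smul])
    have := hid w
    rw [hc, map_smul] at this
    exact smul_right_injective H hc0 this
  have hsymm : ∀ a b : H, ⟪P a, b⟫ = ⟪a, P b⟫ :=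
    (ContinuousLinearMap.isSelfAdjoint_iff_isSymmetric.mp hsa)
  have hn : ⟪ψ, ψ⟫ ≠ 0 := inner_self_ne_zero.mpr hψ
  have hμ' : ⟪μ, ψ⟫ ≠ 0 := by
    rw [← inner_conj_symm]
    exact (map_ne_zero _).mpr hμ
  have hP : ∀ v, P v = (⟪ψ, v⟫ / ⟪ψ, ψ⟫) • ψ := by
    intro v
    obtain ⟨c, hc⟩ := hspan v
    have h1 := hsymm ψ v
    rw [hPψ, hc, inner_smul_right] at h1
    rw [hc, h1, mul_div_cancel_right₀ _ hn]
  rw [hP μ, hP η]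
  simp only [inner_smul_left, inner_smul_right, map_div₀, map_mul, map_inv₀, inner_conj_symm]
  field_simp

/-- **Parseval identity.** Assume `S_μ ∩ ℝ = ∅` and let `A♯` be a
self-adjoint extension with eigenvalues `{x n}` and orthogonal eigenprojections `{P n}`
satisfying `Σ_n P n = I` strongly. Then for all `φ, η ∈ H`,
`⟪φ, η⟫ = Σ_n ⟪P_n μ, μ⟫ · conj(φ̂(x n)) · η̂(x n)`. -/
theorem statement10 [TopologicalSpace.SeparableSpace H]
    (S : KreinOp H)
    (B : H →ₗ.[ℂ] H) (hB : IsSAExt S.A B)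
    (ι : Type) [Countable ι]
    (x : ι → ℝ) (hxinj : Function.Injective x)
    (P : ι → H →L[ℂ] H) (hP : ∀ n, IsEigenProjection B (x n) (P n))
    (hsum : ∀ v : H, HasSum (fun n => P n v) v)
    (B' : H →ₗ.[ℂ] H) (hB' : IsSAExt S.A B') (hBB' : B ≠ B')
    (res' : Set ℂ) (R' : ℂ → H →L[ℂ] H) (hR' : IsResolventOn B' res' R')
    (z₀ : ℂ) (hz₀ : z₀ ∈ res')
    (ψ₀ : H) (hψ₀ne : ψ₀ ≠ 0) (hψ₀ : InKerShift S.A.adjoint z₀ ψ₀)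
    (μ : H) (hSmuR : ∀ t : ℝ, (t : ℂ) ∉ Smu S.A μ)
    (hxres' : ∀ n, ((x n : ℝ) : ℂ) ∈ res')
    (φ η : H) :
    HasSum
      (fun n =>
        ⟪P n μ, μ⟫ * conj (⟪xiFun μ R' z₀ ψ₀ ((x n : ℝ) : ℂ), φ⟫)
          * ⟪xiFun μ R' z₀ ψ₀ ((x n : ℝ) : ℂ), η⟫)
      ⟪φ, η⟫ := by
  -- Pairing the strong expansion `Σ P n η = η` with `φ` reduces the claim to single terms.
  have hφ : HasSum (fun n => ⟪φ, P n η⟫) ⟪φ, η⟫ := (hsum η).mapL (innerSL ℂ φ)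
  suffices h : ∀ n, ⟪P n μ, μ⟫ * conj ⟪xiFun μ R' z₀ ψ₀ (x n), φ⟫ * ⟪xiFun μ R' z₀ ψ₀ (x n), η⟫
      = ⟪φ, P n η⟫ from (funext h) ▸ hφ
  intro n
  obtain ⟨hsa, hid, hker⟩ := hP n
  have hBA' := hB'.le_adjoint S.dense
  have hψ := psiFun_inKerShift hBA' hR' (hxres' n) hψ₀
  have hne := psiFun_ne_zero hBA' hR' hz₀ (hxres' n) hψ₀ne hψ₀
  have hμ := inner_gauge_ne_zero S.dense (hSmuR (x n)) hψ hne
  have hspan : ∀ v, ∃ c : ℂ, P n v = c • psiFun R' z₀ ψ₀ (x n) := by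
    intro v
    obtain ⟨u, -, hu⟩ := S.defOneOne (x n)
    obtain ⟨a, ha⟩ := hu.subset hψ
    obtain ⟨b, hb⟩ := hu.subset (((hker _).mp (hid v)).mono (hB.le_adjoint S.dense))
    have ha0 : a ≠ 0 := by
      rintro rfl
      exact hne (by rw [ha, zero_smul])
    exact ⟨b / a, by rw [hb, ha, smul_smul, div_mul_cancel₀ _ ha0]⟩
  simp only [xiFun, conj_ofReal]
  exact inner_proj_eq hsa hid hne hspan hμ φ η

end
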